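/- If n ≥ 0, then for every q ∈ Q with q ≠ 0 the quantity |q|(2(m+1)(n+1)+2d−|q|) + Σ_{i=1}^m (2 d_i q_i − q_i² − 2 i q_i) is strictly positive; consequently 0 is never resonant for (D,n): α(D−q;n,0) ≠ α(D;n,0) for every q ∈ Q with q ≠ 0. -/

import Mathlib

/-!
Write `S = ∑ eᵢ`, `A = ∑ eᵢ²`, `T = ∑ i eᵢ`. At `δ = 0` the Casimir eigenvalue collapses to
`m n (n + 1) / 2 + (2 (m + 1) (n + 1) S + S² + A - 2 T) / (2 (m + 1))`
(`casimirEigenvalue_zero`). Replacing `d` by `d - q` therefore lowers the eigenvalue by exactly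
the displayed quantity divided by `2 (m + 1)`, and both conclusions reduce to its positivity.

For the positivity, `qᵢ ≤ dᵢ` gives `|q| ≤ |d|` and `2 dᵢ qᵢ - qᵢ² ≥ 0`, while `i ≤ m` gives
`∑ 2 i qᵢ ≤ 2 m |q|`. As `n ≥ 0`, the quantity is at least `2 (m + 1) |q| - 2 m |q| = 2 |q| > 0`.
-/

open Finset

/-- The eigenvalue by which the Casimir operator of the projective algebra
`sl(m+1,ℝ)` acts on sections of the bundle associated to the irreducible
`GL(m,ℝ)`-representation characterized by the Young diagram `e` (indexed by
`1, …, m`), the integer `n` and the weight `δ`. -/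
noncomputable def casimirEigenvalue (m : ℕ) (n : ℤ) (e : ℕ → ℕ) (δ : ℝ) : ℝ :=
  ((m * ((n : ℝ) - δ) + ∑ i ∈ Finset.Icc 1 m, (e i : ℝ)) *
      (m * ((n : ℝ) + 1 - δ) + ∑ i ∈ Finset.Icc 1 m, (e i : ℝ))) / (2 * m) +
    (1 / (2 * m * (m + 1))) *
      ∑ i ∈ Finset.Icc 1 m, ∑ j ∈ Finset.Icc 1 m,
        ((e i : ℝ) * (e j : ℝ) * (m * (if i = j then (1 : ℝ) else 0) - 1) +
          2 * (e i : ℝ) * ((m : ℝ) - (j : ℝ)) * (m * (if i = j then (1 : ℝ) else 0) - 1))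

/-- The resonance value `R(q)` attached to a nonzero label `q` of the branching law,
for the Young diagram `d` (of depth at most `m-1`) and the integer `n`. -/
noncomputable def resonance (m : ℕ) (n : ℤ) (d q : ℕ → ℕ) : ℝ :=
  ((∑ i ∈ Finset.Icc 1 m, (q i : ℝ)) *
      (2 * ((m : ℝ) + 1) * ((n : ℝ) + 1) + 2 * (∑ i ∈ Finset.Icc 1 (m - 1), (d i : ℝ)) -
        ∑ i ∈ Finset.Icc 1 m, (q i : ℝ)) +
    ∑ i ∈ Finset.Icc 1 m,
      (2 * (d i : ℝ) * (q i : ℝ) - (q i : ℝ) ^ 2 - 2 * (i : ℝ) * (q i : ℝ))) /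
    (2 * (∑ i ∈ Finset.Icc 1 m, (q i : ℝ)) * ((m : ℝ) + 1))

theorem sum_Icc_sub_cast (m : ℕ) :
    ∑ j ∈ Finset.Icc 1 m, ((m : ℝ) - (j : ℝ)) = m * (m - 1) / 2 := by
  have h : ∀ k : ℕ, ∑ j ∈ Finset.Icc 1 k, (j : ℝ) = k * (k + 1) / 2 := by
    intro k
    induction k with
    | zero => simp
    | succ k ih =>
      rw [Finset.sum_Icc_succ_top (by omega), ih]
      push_cast
      ring
  rw [Finset.sum_sub_distrib, h]
  simp
  ring

/-- Evaluation of the double sum in the Casimir eigenvalue: the Kronecker delta isolates the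
diagonal and the remaining part factors as a product of sums. -/
theorem casimir_double_sum (m : ℕ) (e : ℕ → ℝ) :
    ∑ i ∈ Finset.Icc 1 m, ∑ j ∈ Finset.Icc 1 m,
        (e i * e j * (m * (if i = j then (1 : ℝ) else 0) - 1) +
          2 * e i * ((m : ℝ) - (j : ℝ)) * (m * (if i = j then (1 : ℝ) else 0) - 1)) =
      m * ∑ i ∈ Finset.Icc 1 m, e i ^ 2 - (∑ i ∈ Finset.Icc 1 m, e i) ^ 2 +
        2 * m * (m * ∑ i ∈ Finset.Icc 1 m, e i - ∑ i ∈ Finset.Icc 1 m, (i : ℝ) * e i) -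
        m * (m - 1) * ∑ i ∈ Finset.Icc 1 m, e i := by
  have inner : ∀ i ∈ Finset.Icc 1 m, ∑ j ∈ Finset.Icc 1 m,
        (e i * e j * (m * (if i = j then (1 : ℝ) else 0) - 1) +
          2 * e i * ((m : ℝ) - (j : ℝ)) * (m * (if i = j then (1 : ℝ) else 0) - 1)) =
      m * e i ^ 2 - e i * (∑ j ∈ Finset.Icc 1 m, e j) +
        2 * m * (m * e i - (i : ℝ) * e i) - m * (m - 1) * e i := by
    intro i hi
    have split : ∀ j ∈ Finset.Icc 1 m,
        (e i * e j * (m * (if i = j then (1 : ℝ) else 0) - 1) +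
          2 * e i * ((m : ℝ) - (j : ℝ)) * (m * (if i = j then (1 : ℝ) else 0) - 1)) =
        (if i = j then m * (e i * e j) + 2 * m * e i * ((m : ℝ) - (j : ℝ)) else 0) -
          e i * e j - 2 * e i * ((m : ℝ) - (j : ℝ)) := by
      intro j _
      split_ifs <;> ring
    rw [Finset.sum_congr rfl split, Finset.sum_sub_distrib, Finset.sum_sub_distrib,
      Finset.sum_ite_eq, if_pos hi, ← Finset.mul_sum, ← Finset.mul_sum, sum_Icc_sub_cast]
    ring
  rw [Finset.sum_congr rfl inner, Finset.sum_sub_distrib, Finset.sum_add_distrib,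
    Finset.sum_sub_distrib, ← Finset.mul_sum, ← Finset.sum_mul, ← Finset.mul_sum,
    ← Finset.mul_sum, Finset.sum_sub_distrib, ← Finset.mul_sum]
  ring

theorem casimirEigenvalue_zero (m : ℕ) (hm : 2 ≤ m) (n : ℤ) (e : ℕ → ℕ) :
    casimirEigenvalue m n e 0 = m * n * (n + 1) / 2 +
      (2 * ((m : ℝ) + 1) * ((n : ℝ) + 1) * (∑ i ∈ Finset.Icc 1 m, (e i : ℝ)) +
        (∑ i ∈ Finset.Icc 1 m, (e i : ℝ)) ^ 2 + ∑ i ∈ Finset.Icc 1 m, (e i : ℝ) ^ 2 -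
        2 * ∑ i ∈ Finset.Icc 1 m, (i : ℝ) * (e i : ℝ)) / (2 * ((m : ℝ) + 1)) := by
  have hm0 : (m : ℝ) ≠ 0 := by positivity
  have hm1 : (m : ℝ) + 1 ≠ 0 := by positivity
  unfold casimirEigenvalue
  rw [casimir_double_sum m (fun i => (e i : ℝ))]
  field_simp
  ring

/-- If `n ≥ 0`, then for every `q ∈ Q` with `q ≠ 0` the numerator of `R(q)` is
strictly positive; consequently `0` is never resonant for `(D,n)`. -/
theorem zero_not_resonant (m : ℕ) (hm : 2 ≤ m) (n : ℤ) (hn : 0 ≤ n) (d : ℕ → ℕ)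
    (hd_anti : ∀ i, 1 ≤ i → i < m → d (i + 1) ≤ d i)
    (hdm : d m = 0) (hdm1 : d (m + 1) = 0)
    (q : ℕ → ℕ) (hq : ∀ i, 1 ≤ i → i ≤ m → q i ≤ d i - d (i + 1))
    (hq0 : ∃ i ∈ Finset.Icc 1 m, q i ≠ 0) :
    0 < (∑ i ∈ Finset.Icc 1 m, (q i : ℝ)) *
          (2 * ((m : ℝ) + 1) * ((n : ℝ) + 1) + 2 * (∑ i ∈ Finset.Icc 1 (m - 1), (d i : ℝ)) -
            ∑ i ∈ Finset.Icc 1 m, (q i : ℝ)) +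
        ∑ i ∈ Finset.Icc 1 m,
          (2 * (d i : ℝ) * (q i : ℝ) - (q i : ℝ) ^ 2 - 2 * (i : ℝ) * (q i : ℝ)) ∧
      casimirEigenvalue m n (fun i => d i - q i) 0 ≠ casimirEigenvalue m n d 0 := by
  have hqd : ∀ i ∈ Finset.Icc 1 m, q i ≤ d i := by
    intro i hi
    rw [Finset.mem_Icc] at hi
    exact (hq i hi.1 hi.2).trans (Nat.sub_le _ _)
  -- The last row is empty, so `|d|` may be summed over all `m` rows.
  have hD : ∑ i ∈ Finset.Icc 1 (m - 1), (d i : ℝ) = ∑ i ∈ Finset.Icc 1 m, (d i : ℝ) := by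
    obtain ⟨k, rfl⟩ : ∃ k, m = k + 1 := ⟨m - 1, by omega⟩
    rw [Finset.sum_Icc_succ_top (by omega), hdm]
    simp
  rw [hD]
  have hpos : 0 < ∑ i ∈ Finset.Icc 1 m, (q i : ℝ) := by
    obtain ⟨i, hi, hne⟩ := hq0
    exact Finset.sum_pos' (fun _ _ => Nat.cast_nonneg _)
      ⟨i, hi, by exact_mod_cast Nat.pos_of_ne_zero hne⟩
  have hle : ∑ i ∈ Finset.Icc 1 m, (q i : ℝ) ≤ ∑ i ∈ Finset.Icc 1 m, (d i : ℝ) :=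
    Finset.sum_le_sum fun i hi => by exact_mod_cast hqd i hi
  have hrow : -(2 * m) * ∑ i ∈ Finset.Icc 1 m, (q i : ℝ) ≤ ∑ i ∈ Finset.Icc 1 m,
      (2 * (d i : ℝ) * (q i : ℝ) - (q i : ℝ) ^ 2 - 2 * (i : ℝ) * (q i : ℝ)) := by
    rw [Finset.mul_sum]
    refine Finset.sum_le_sum fun i hi => ?_
    have h1 : (q i : ℝ) ≤ d i := by exact_mod_cast hqd i hi
    have h2 : (i : ℝ) ≤ m := by exact_mod_cast (Finset.mem_Icc.1 hi).2
    have h3 : (0 : ℝ) ≤ q i := Nat.cast_nonneg _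
    nlinarith [mul_nonneg h3 (sub_nonneg.2 h1), mul_nonneg h3 (sub_nonneg.2 h2), mul_nonneg h3 h3]
  have hn' : (0 : ℝ) ≤ n := by exact_mod_cast hn
  have hm' : (0 : ℝ) ≤ m := Nat.cast_nonneg _
  have key : 0 < (∑ i ∈ Finset.Icc 1 m, (q i : ℝ)) *
          (2 * ((m : ℝ) + 1) * ((n : ℝ) + 1) + 2 * (∑ i ∈ Finset.Icc 1 m, (d i : ℝ)) -
            ∑ i ∈ Finset.Icc 1 m, (q i : ℝ)) +
        ∑ i ∈ Finset.Icc 1 m,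
          (2 * (d i : ℝ) * (q i : ℝ) - (q i : ℝ) ^ 2 - 2 * (i : ℝ) * (q i : ℝ)) := by
    have hfac : 2 * (m : ℝ) + 2 ≤ 2 * ((m : ℝ) + 1) * ((n : ℝ) + 1) +
        2 * (∑ i ∈ Finset.Icc 1 m, (d i : ℝ)) - ∑ i ∈ Finset.Icc 1 m, (q i : ℝ) := by
      nlinarith [mul_nonneg hm' hn']
    nlinarith [mul_le_mul_of_nonneg_left hfac hpos.le]
  refine ⟨key, fun heq => ?_⟩
  rw [casimirEigenvalue_zero m hm, casimirEigenvalue_zero m hm, add_right_inj,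
    div_left_inj' (by positivity)] at heq
  -- On the rows in play the truncated subtraction `d i - q i` is a genuine one.
  have hcast : ∀ i ∈ Finset.Icc 1 m, ((d i - q i : ℕ) : ℝ) = (d i : ℝ) - q i :=
    fun i hi => Nat.cast_sub (hqd i hi)
  have hS : ∑ i ∈ Finset.Icc 1 m, ((d i - q i : ℕ) : ℝ) =
      ∑ i ∈ Finset.Icc 1 m, (d i : ℝ) - ∑ i ∈ Finset.Icc 1 m, (q i : ℝ) := by
    rw [Finset.sum_congr rfl hcast, Finset.sum_sub_distrib]
  have hAT : ∑ i ∈ Finset.Icc 1 m,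
        (2 * (d i : ℝ) * (q i : ℝ) - (q i : ℝ) ^ 2 - 2 * (i : ℝ) * (q i : ℝ)) =
      (∑ i ∈ Finset.Icc 1 m, (d i : ℝ) ^ 2 - 2 * ∑ i ∈ Finset.Icc 1 m, (i : ℝ) * (d i : ℝ)) -
      (∑ i ∈ Finset.Icc 1 m, ((d i - q i : ℕ) : ℝ) ^ 2 -
        2 * ∑ i ∈ Finset.Icc 1 m, (i : ℝ) * ((d i - q i : ℕ) : ℝ)) := by
    simp only [Finset.mul_sum, ← Finset.sum_sub_distrib]
    refine Finset.sum_congr rfl fun i hi => ?_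
    rw [hcast i hi]
    ring
  rw [hS] at heq
  rw [hAT] at key
  nlinarith [key, heq]
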